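/- Let U ⊆ ℝ² be open, u ∈ C²(U, ℝ²) and Π ∈ C¹(U, ℝ) satisfy Δu = ∇Π and div u = 0 on U. Then at every point of U one has the pointwise identity ∂₂(‖∇u‖_F²) = 2 div(((∇u)ᵀ − Π E₂) ∂₂u). -/

import Mathlib

/-!
Write `a = ∂₁u₁`, `b = ∂₂u₁`, `c = ∂₁u₂`, `d = ∂₂u₂`; these are differentiable on `U`. Expanding the
divergence by the product rule and substituting the equation `Δu = ∇Π` leaves
`a ∂₁b + b ∂₂b + c ∂₁d + d ∂₂d - Π (∂₁b + ∂₂d)`. Symmetry of second derivatives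
(`pd1_pd2_comm`) gives `∂₁b = ∂₂a` and `∂₁d = ∂₂c`, so the first four terms are half of
`∂₂(‖∇u‖_F²)`, while `∂₁b + ∂₂d = ∂₂(div u) = 0` because `div u` vanishes near the point.
-/

noncomputable section

/-- Partial derivative in the first coordinate direction. -/
def pd1 (g : ℝ × ℝ → ℝ) (x : ℝ × ℝ) : ℝ := fderiv ℝ g x (1, 0)

/-- Partial derivative in the second coordinate direction. -/
def pd2 (g : ℝ × ℝ → ℝ) (x : ℝ × ℝ) : ℝ := fderiv ℝ g x (0, 1)

lemma differentiableAt_fderiv_apply {g : ℝ × ℝ → ℝ} {x : ℝ × ℝ} (hg : ContDiffAt ℝ 2 g x)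
    (v : ℝ × ℝ) : DifferentiableAt ℝ (fun y => fderiv ℝ g y v) x :=
  ((hg.fderiv_right (m := 1) (by norm_num)).differentiableAt (by norm_num)).clm_apply
    (differentiableAt_const v)

lemma pd1_pd2_comm {g : ℝ × ℝ → ℝ} {x : ℝ × ℝ} (hg : ContDiffAt ℝ 2 g x) :
    pd1 (pd2 g) x = pd2 (pd1 g) x := by
  have hd : DifferentiableAt ℝ (fderiv ℝ g) x :=
    (hg.fderiv_right (m := 1) (by norm_num)).differentiableAt (by norm_num)
  have hs : IsSymmSndFDerivAt ℝ g x := hg.isSymmSndFDerivAt (by simp)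
  have key : ∀ v w : ℝ × ℝ,
      fderiv ℝ (fun y => fderiv ℝ g y v) x w = fderiv ℝ (fderiv ℝ g) x w v := by
    intro v w
    rw [fderiv_clm_apply hd (differentiableAt_const v)]
    simp
  change fderiv ℝ (fun y => fderiv ℝ g y (0, 1)) x (1, 0)
    = fderiv ℝ (fun y => fderiv ℝ g y (1, 0)) x (0, 1)
  rw [key, key]
  exact hs _ _

/-- Let `u = (u₁,u₂) ∈ C²(U,ℝ²)` and `Π ∈ C¹(U,ℝ)` satisfy `Δu = ∇Π` and `div u = 0`
on the open set `U ⊆ ℝ²`.  Then at every point of `U` one has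
`∂₂(‖∇u‖_F²) = 2 div(((∇u)ᵀ − Π E₂) ∂₂u)`.
Here `‖∇u‖_F² = (∂₁u₁)² + (∂₂u₁)² + (∂₁u₂)² + (∂₂u₂)²` and the vector field
`((∇u)ᵀ − Π E₂) ∂₂u` has the components written out below. -/
theorem rellich_pointwise_identity_two
    (U : Set (ℝ × ℝ)) (hU : IsOpen U)
    (u : ℝ × ℝ → ℝ × ℝ) (Pr : ℝ × ℝ → ℝ)
    (hu : ContDiffOn ℝ 2 u U) (hPr : ContDiffOn ℝ 1 Pr U)
    (u1 u2 : ℝ × ℝ → ℝ)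
    (hu1 : u1 = fun x => (u x).1) (hu2 : u2 = fun x => (u x).2)
    (hstokes1 : ∀ x ∈ U, pd1 (pd1 u1) x + pd2 (pd2 u1) x = pd1 Pr x)
    (hstokes2 : ∀ x ∈ U, pd1 (pd1 u2) x + pd2 (pd2 u2) x = pd2 Pr x)
    (hdiv : ∀ x ∈ U, pd1 u1 x + pd2 u2 x = 0) :
    ∀ x ∈ U,
      pd2 (fun y => (pd1 u1 y) ^ 2 + (pd2 u1 y) ^ 2
          + (pd1 u2 y) ^ 2 + (pd2 u2 y) ^ 2) x
        = 2 * (pd1 (fun y => (pd1 u1 y - Pr y) * pd2 u1 y + pd1 u2 y * pd2 u2 y) x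
             + pd2 (fun y => pd2 u1 y * pd2 u1 y + (pd2 u2 y - Pr y) * pd2 u2 y) x) := by
  intro x hx
  have hUx : U ∈ nhds x := hU.mem_nhds hx
  have hc : ContDiffAt ℝ 2 u x := hu.contDiffAt hUx
  have hc1 : ContDiffAt ℝ 2 u1 x := hu1 ▸ hc.fst
  have hc2 : ContDiffAt ℝ 2 u2 x := hu2 ▸ hc.snd
  have hP : HasFDerivAt Pr (fderiv ℝ Pr x) x :=
    ((hPr.contDiffAt hUx).differentiableAt (by norm_num)).hasFDerivAt
  have ha : HasFDerivAt (pd1 u1) (fderiv ℝ (pd1 u1) x) x :=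
    (differentiableAt_fderiv_apply hc1 (1, 0)).hasFDerivAt
  have hb : HasFDerivAt (pd2 u1) (fderiv ℝ (pd2 u1) x) x :=
    (differentiableAt_fderiv_apply hc1 (0, 1)).hasFDerivAt
  have hcc : HasFDerivAt (pd1 u2) (fderiv ℝ (pd1 u2) x) x :=
    (differentiableAt_fderiv_apply hc2 (1, 0)).hasFDerivAt
  have hd : HasFDerivAt (pd2 u2) (fderiv ℝ (pd2 u2) x) x :=
    (differentiableAt_fderiv_apply hc2 (0, 1)).hasFDerivAt
  -- `div u` vanishes on a neighbourhood of `x`, hence so does its derivative at `x`.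
  have hdiv2 : pd2 (pd1 u1) x + pd2 (pd2 u2) x = 0 := by
    have h0 : (fun y => pd1 u1 y + pd2 u2 y) =ᶠ[nhds x] fun _ => (0 : ℝ) :=
      Filter.mem_of_superset hUx hdiv
    have h1 := h0.fderiv_eq (𝕜 := ℝ)
    rw [(ha.fun_add hd).fderiv, fderiv_fun_const] at h1
    exact DFunLike.congr_fun h1 (0, 1)
  have e1 := pd1_pd2_comm hc1
  have e2 := pd1_pd2_comm hc2
  have s1 := hstokes1 x hx
  have s2 := hstokes2 x hx
  have L : pd2 (fun y => (pd1 u1 y) ^ 2 + (pd2 u1 y) ^ 2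
      + (pd1 u2 y) ^ 2 + (pd2 u2 y) ^ 2) x
      = 2 * (pd1 u1 x * pd2 (pd1 u1) x + pd2 u1 x * pd2 (pd2 u1) x
        + pd1 u2 x * pd2 (pd1 u2) x + pd2 u2 x * pd2 (pd2 u2) x) := by
    simp only [pow_two]
    rw [pd2, ((((ha.fun_mul ha).fun_add (hb.fun_mul hb)).fun_add (hcc.fun_mul hcc)).fun_add
      (hd.fun_mul hd)).fderiv]
    change (pd1 u1 x * pd2 (pd1 u1) x + pd1 u1 x * pd2 (pd1 u1) x)
      + (pd2 u1 x * pd2 (pd2 u1) x + pd2 u1 x * pd2 (pd2 u1) x)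
      + (pd1 u2 x * pd2 (pd1 u2) x + pd1 u2 x * pd2 (pd1 u2) x)
      + (pd2 u2 x * pd2 (pd2 u2) x + pd2 u2 x * pd2 (pd2 u2) x) = _
    ring
  have R1 : pd1 (fun y => (pd1 u1 y - Pr y) * pd2 u1 y + pd1 u2 y * pd2 u2 y) x
      = (pd1 u1 x - Pr x) * pd1 (pd2 u1) x + pd2 u1 x * (pd1 (pd1 u1) x - pd1 Pr x)
        + (pd1 u2 x * pd1 (pd2 u2) x + pd2 u2 x * pd1 (pd1 u2) x) := by
    rw [pd1, (((ha.fun_sub hP).fun_mul hb).fun_add (hcc.fun_mul hd)).fderiv]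
    rfl
  have R2 : pd2 (fun y => pd2 u1 y * pd2 u1 y + (pd2 u2 y - Pr y) * pd2 u2 y) x
      = (pd2 u1 x * pd2 (pd2 u1) x + pd2 u1 x * pd2 (pd2 u1) x)
        + ((pd2 u2 x - Pr x) * pd2 (pd2 u2) x
          + pd2 u2 x * (pd2 (pd2 u2) x - pd2 Pr x)) := by
    rw [pd2, ((hb.fun_mul hb).fun_add ((hd.fun_sub hP).fun_mul hd)).fderiv]
    rfl
  rw [L, R1, R2, e1, e2]
  linear_combination (-2 * pd2 u1 x) * s1 - 2 * pd2 u2 x * s2 + 2 * Pr x * hdiv2
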